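/- Strong non-U-shapedness restricts iterative learning from informant: there exists a class 𝓛 of languages that is Ex-learnable from informant by an iterative learner, but no iterative learner that is strongly non-U-shaped on every informant for every member of 𝓛 Ex-learns 𝓛 from informant; that is, [ItInfSNUEx] ⊊ [ItInfEx]. -/

import Mathlib

/-- `W p` is the domain of the `p`-th partial computable function
(the `W`-hypothesis space for an acceptable numbering). -/
def W (p : ℕ) : Set ℕ := {n | ((Denumerable.ofNat Nat.Partrec.Code p).eval n).Dom}

/-- A labeled datum: a natural number together with a Boolean label. -/
abbrev Datum := ℕ × Bool

/-- The initial segment `I[t]` of an informant `I`, of length `t`. -/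
def seg (I : ℕ → Datum) (t : ℕ) : List Datum := (List.range t).map I

/-- The positively labeled numbers occurring in a finite sequence. -/
def posOf (σ : List Datum) : Set ℕ := {x | (x, true) ∈ σ}

/-- The negatively labeled numbers occurring in a finite sequence. -/
def negOf (σ : List Datum) : Set ℕ := {x | (x, false) ∈ σ}

/-- A finite sequence over ℕ × Bool is consistently labeled. -/
def ConsistentSeq (σ : List Datum) : Prop :=
  ∀ x b b', (x, b) ∈ σ → (x, b') ∈ σ → b = b'

/-- `I` is an informant for the language `L`. -/
def IsInformant (L : Set ℕ) (I : ℕ → Datum) : Prop :=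
  (∀ t, ((I t).2 = true ↔ (I t).1 ∈ L)) ∧ Function.Surjective (fun t => (I t).1)

/-- `M` Ex-learns `L` from the particular informant `I`. -/
def ExLearnsFrom (M : List Datum →. ℕ) (L : Set ℕ) (I : ℕ → Datum) : Prop :=
  ∃ t₀ e, W e = L ∧ ∀ t, t₀ ≤ t → M (seg I t) = Part.some e

/-- `M` Ex-learns `L` from informant. -/
def ExLearns (M : List Datum →. ℕ) (L : Set ℕ) : Prop :=
  ∀ I, IsInformant L I → ExLearnsFrom M L I

/-- `M` is an iterative learner: its value on `σ⌢x` is computed from its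
value on `σ` and the datum `x` alone. -/
def Iterative (M : List Datum →. ℕ) : Prop :=
  ∃ h : ℕ × Datum →. ℕ, Partrec h ∧
    ∀ σ x, M (σ ++ [x]) = (M σ).bind (fun e => h (e, x))

/-- `𝓛 ∈ [ItInfEx]`: some iterative partial computable learner
Ex-learns every member of `𝓛` from informant. -/
def ItInfEx (𝓛 : Set (Set ℕ)) : Prop :=
  ∃ M : List Datum →. ℕ, Partrec M ∧ Iterative M ∧ ∀ L ∈ 𝓛, ExLearns M L

/-- The set of numbers about which the informant `I` gives positive information. -/
def posI (I : ℕ → Datum) : Set ℕ := {y | ∃ t, I t = (y, true)}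

/-- `M` is strongly non-U-shaped on `I`: whenever `W_{h_r} = W_{h_t} = pos(I)`
for `r ≤ s ≤ t`, then `h_r = h_s` (syntactically). -/
def SNUOn (M : List Datum →. ℕ) (I : ℕ → Datum) : Prop :=
  ∀ r s t, r ≤ s → s ≤ t → ∀ er es et,
    M (seg I r) = Part.some er → M (seg I s) = Part.some es → M (seg I t) = Part.some et →
    W er = posI I → W et = posI I → er = es

/-- `𝓛 ∈ [ItInfSNUEx]`: some iterative learner Ex-learns every member of `𝓛` from
informant and is strongly non-U-shaped on every informant for every member of `𝓛`. -/
def ItInfSNUEx (𝓛 : Set (Set ℕ)) : Prop :=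
  ∃ M : List Datum →. ℕ, Partrec M ∧ Iterative M ∧
    (∀ L ∈ 𝓛, ExLearns M L) ∧
    ∀ L ∈ 𝓛, ∀ I, IsInformant L I → SNUOn M I

/-!
Each column `n` of `ℕ` carries a computable process that diagonalizes against one learner `M`. It
searches for a list of numbers that makes `M`, learning the odd part of the column, change its
conjecture; a success shows that list to `M` and creates a new even number of the column as an
*anomaly*. The class consists of `∅`, the odd parts of the columns and, for every odd `b` beyond the
last success in its column, the finite language made of `b`, the anomalies, and the odd numbers
shown so far.

An iterative learner first waits for an anomaly, whose label tells whether the language is the odd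
part of the column. If it is not, then `b` is the only odd member that comes after all successes,
so it suffices to remember a positive odd number seen after the most successes. If it is, then
either the first anomaly freezes the state or the number of successes bounds the changes.

Suppose that a strongly non-U-shaped learner `M` learns the class. If its process succeeds
infinitely often, the shown lists form an informant on which `M` does not converge. Otherwise, since
no list changes the conjecture of `M` after the last success, this conjecture is already correct for
the odd part of the column. By strong non-U-shapedness it never changes on odd numbers labeled
positively. So `M` cannot see `b`, whereas the finite languages differ in `b`. The anomalies would
spoil this argument, being absent from the odd part and present in the finite languages; therefore a
success also requires that showing the old anomalies does not change the conjecture again, and they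
can be left out without `M` noticing.
-/

open Filter
open Nat.Partrec (Code)

/-! ### Finite informant sequences -/

section Sequences

variable {L : Set ℕ} {I f : ℕ → Datum} {σ τ : List Datum}

theorem seg_succ (I : ℕ → Datum) (t : ℕ) : seg I (t + 1) = seg I t ++ [I t] := by
  simp [seg, List.range_succ]

theorem length_seg (I : ℕ → Datum) (t : ℕ) : (seg I t).length = t := by
  simp [seg]

theorem mem_seg {t : ℕ} {d : Datum} : d ∈ seg I t ↔ ∃ i < t, I i = d := by
  simp [seg]

theorem eq_seg_of_prefix_seg {t : ℕ} (h : σ <+: seg I t) : σ = seg I σ.length := by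
  have hle : σ.length ≤ t := length_seg I t ▸ h.length_le
  conv_lhs => rw [List.prefix_iff_eq_take.1 h]
  rw [seg, ← List.map_take, List.take_range, min_eq_left hle, seg]

/-- The infinite sequence that starts with `σ` and continues with `f`. -/
def prepend (σ : List Datum) (f : ℕ → Datum) (t : ℕ) : Datum :=
  σ.getD t (f (t - σ.length))

theorem prepend_length_add (σ : List Datum) (f : ℕ → Datum) (k : ℕ) :
    prepend σ f (σ.length + k) = f k := by
  simp [prepend]

theorem seg_prepend (σ : List Datum) (f : ℕ → Datum) (k : ℕ) :
    seg (prepend σ f) (σ.length + k) = σ ++ seg f k := by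
  induction k with
  | zero =>
    refine List.ext_getElem (by simp [seg]) fun i _ hi => ?_
    have hi : i < σ.length := by simpa [seg] using hi
    simp [seg, prepend, hi]
  | succ k ih =>
    rw [← add_assoc, seg_succ, ih, prepend_length_add, seg_succ, List.append_assoc]

theorem seg_prepend_length (σ : List Datum) (f : ℕ → Datum) :
    seg (prepend σ f) σ.length = σ := by
  simpa [seg] using seg_prepend σ f 0

/-- The label of the datum `d` is right for the language `L`. -/
def LabeledBy (L : Set ℕ) (d : Datum) : Prop := d.2 = true ↔ d.1 ∈ L

/-- All labels in the finite sequence `σ` are right for the language `L`. -/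
def CorrectFor (L : Set ℕ) (σ : List Datum) : Prop := ∀ d ∈ σ, LabeledBy L d

theorem CorrectFor.append (hσ : CorrectFor L σ) (hτ : CorrectFor L τ) : CorrectFor L (σ ++ τ) :=
  fun d hd => (List.mem_append.1 hd).elim (hσ d) (hτ d)

theorem correctFor_singleton {d : Datum} (h : LabeledBy L d) : CorrectFor L [d] :=
  fun _ hd => List.mem_singleton.1 hd ▸ h

open Classical in
/-- The datum that labels `z` correctly for `L`. -/
noncomputable def label (L : Set ℕ) (z : ℕ) : Datum := (z, decide (z ∈ L))

theorem labeledBy_label (L : Set ℕ) (z : ℕ) : LabeledBy L (label L z) := by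
  simp [LabeledBy, label]

theorem label_of_notMem {z : ℕ} (h : z ∉ L) : label L z = (z, false) := by
  simp [label, h]

theorem correctFor_map_label (L : Set ℕ) (l : List ℕ) : CorrectFor L (l.map (label L)) := by
  intro d hd
  obtain ⟨z, -, rfl⟩ := List.mem_map.1 hd
  exact labeledBy_label L z

theorem LabeledBy.congr {L' : Set ℕ} {d : Datum} (h : LabeledBy L d) (hd : d.1 ∈ L ↔ d.1 ∈ L') :
    LabeledBy L' d :=
  Iff.trans h hd

theorem isInformant_label (L : Set ℕ) : IsInformant L (label L) :=
  ⟨labeledBy_label L, fun z => ⟨z, rfl⟩⟩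

theorem IsInformant.posI_eq (hI : IsInformant L I) : posI I = L := by
  ext z
  constructor
  · rintro ⟨t, ht⟩
    simpa [ht] using hI.1 t
  · intro hz
    obtain ⟨t, rfl⟩ := hI.2 z
    exact ⟨t, Prod.ext rfl ((hI.1 t).2 hz)⟩

theorem isInformant_prepend (hσ : CorrectFor L σ) (hf : ∀ t, LabeledBy L (f t))
    (hcover : ∀ z, z ∈ σ.map Prod.fst ∨ ∃ t, (f t).1 = z) : IsInformant L (prepend σ f) := by
  refine ⟨fun t => ?_, fun z => ?_⟩
  · rcases lt_or_ge t σ.length with ht | ht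
    · simpa [prepend, ht, LabeledBy] using hσ _ (List.getElem_mem ht)
    · obtain ⟨k, rfl⟩ := Nat.exists_eq_add_of_le ht
      rw [prepend_length_add]
      exact hf k
  · rcases hcover z with hz | ⟨t, rfl⟩
    · obtain ⟨i, hi, rfl⟩ := List.getElem_of_mem hz
      have hi' : i < σ.length := by simpa using hi
      exact ⟨i, by simp [prepend, hi']⟩
    · exact ⟨σ.length + t, congrArg Prod.fst (prepend_length_add σ f t)⟩

/-- An enumeration of the complement of `D`. -/
def skip (D : Finset ℕ) (z : ℕ) : ℕ := if z ∈ D then D.sup id + 1 else z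

theorem skip_notMem (D : Finset ℕ) (z : ℕ) : skip D z ∉ D := by
  unfold skip
  split_ifs with hz
  · exact fun h => absurd (Finset.le_sup (f := id) h) (Nat.not_succ_le_self _)
  · exact hz

theorem skip_of_notMem {D : Finset ℕ} {z : ℕ} (hz : z ∉ D) : skip D z = z := if_neg hz

theorem IsInformant.exists_late (hI : IsInformant L I) (T : ℕ) :
    ∀ᶠ a in atTop, ∃ t ≥ T, (I t).1 = a := by
  filter_upwards [eventually_gt_atTop (((Finset.range T).sup fun t => (I t).1))] with a ha
  obtain ⟨t, rfl⟩ := hI.2 a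
  refine ⟨t, not_lt.1 fun ht => ha.not_ge ?_, rfl⟩
  exact Finset.le_sup (f := fun t => (I t).1) (Finset.mem_range.2 ht)

theorem exists_length_ge_of_cover {g : ℕ → List Datum} (hmono : ∀ x y, x ≤ y → g x <+: g y)
    (hcover : ∀ z, ∃ x, z ∈ (g x).map Prod.fst) (t : ℕ) : ∃ x, t ≤ (g x).length := by
  have hmem : ∀ z, ∀ᶠ x in atTop, z ∈ (g x).map Prod.fst := fun z => by
    obtain ⟨x, hx⟩ := hcover z
    filter_upwards [eventually_ge_atTop x] with y hy
    exact List.map_subset _ (hmono x y hy).subset hx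
  obtain ⟨x, hx⟩ := ((Finset.range t).eventually_all.2 fun z _ => hmem z).exists
  refine ⟨x, ?_⟩
  have hsub : Finset.range t ⊆ ((g x).map Prod.fst).toFinset := fun z hz =>
    List.mem_toFinset.2 (hx z hz)
  calc t = (Finset.range t).card := (Finset.card_range t).symm
    _ ≤ ((g x).map Prod.fst).toFinset.card := Finset.card_le_card hsub
    _ ≤ ((g x).map Prod.fst).length := List.toFinset_card_le _
    _ = (g x).length := List.length_map _

theorem exists_informant_of_chain {g : ℕ → List Datum} (hmono : ∀ x y, x ≤ y → g x <+: g y)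
    (hcorrect : ∀ x, CorrectFor L (g x)) (hcover : ∀ z, ∃ x, z ∈ (g x).map Prod.fst) :
    ∃ I, IsInformant L I ∧ ∀ x, seg I (g x).length = g x := by
  choose N hN using fun t => exists_length_ge_of_cover hmono hcover (t + 1)
  have hget : ∀ x t (ht : t < (g x).length), (g (N t))[t]'(hN t) = (g x)[t] := by
    intro x t ht
    rcases le_total (N t) x with h | h
    · exact (hmono _ _ h).getElem (hN t)
    · exact ((hmono _ _ h).getElem ht).symm
  have hseg : ∀ x, seg (fun t => (g (N t))[t]'(hN t)) (g x).length = g x := fun x =>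
    List.ext_getElem (length_seg _ _) fun t _ ht => by simpa [seg] using hget x t ht
  refine ⟨fun t => (g (N t))[t]'(hN t), ⟨fun t => ?_, fun z => ?_⟩, hseg⟩
  · exact hcorrect _ _ (List.getElem_mem _)
  · obtain ⟨x, hx⟩ := hcover z
    obtain ⟨t, ht, rfl⟩ := List.getElem_of_mem hx
    have ht' : t < (g x).length := by simpa using ht
    exact ⟨t, by simp [hget x t ht']⟩

end Sequences

/-! ### Iterative learners -/

section IterativeLearners

variable {M : List Datum →. ℕ} {L : Set ℕ} {σ σ' τ : List Datum}

theorem Iterative.congr_append (hM : Iterative M) (h : M σ = M σ') (ρ : List Datum) :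
    M (σ ++ ρ) = M (σ' ++ ρ) := by
  obtain ⟨step, -, hstep⟩ := hM
  induction ρ using List.reverseRecOn with
  | nil => simpa using h
  | append_singleton ρ d ih => rw [← List.append_assoc, ← List.append_assoc, hstep, hstep, ih]

theorem Iterative.dom_of_append (hM : Iterative M) {ρ : List Datum} (h : (M (σ ++ ρ)).Dom) :
    (M σ).Dom := by
  obtain ⟨step, -, hstep⟩ := hM
  induction ρ using List.reverseRecOn with
  | nil => simpa using h
  | append_singleton ρ d ih =>
    rw [← List.append_assoc, hstep] at h
    exact ih h.1

theorem ExLearns.exists_stable (hL : ExLearns M L) (hσ : CorrectFor L σ) {f : ℕ → Datum}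
    (hf : ∀ t, LabeledBy L (f t)) (hcover : ∀ z, z ∈ σ.map Prod.fst ∨ ∃ t, (f t).1 = z) :
    ∃ K e, W e = L ∧ ∀ k ≥ K, M (σ ++ seg f k) = Part.some e := by
  obtain ⟨K, e, he, hstable⟩ := hL _ (isInformant_prepend hσ hf hcover)
  exact ⟨K, e, he, fun k hk => seg_prepend σ f k ▸ hstable _ (by omega)⟩

theorem ExLearns.exists_stable_label (hL : ExLearns M L) (hσ : CorrectFor L σ) :
    ∃ K e, W e = L ∧ ∀ k ≥ K, M (σ ++ seg (label L) k) = Part.some e :=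
  hL.exists_stable hσ (labeledBy_label L) fun z => Or.inr ⟨z, rfl⟩

theorem ExLearns.dom (hM : Iterative M) (hL : ExLearns M L) (hσ : CorrectFor L σ) :
    (M σ).Dom := by
  obtain ⟨K, e, -, hstable⟩ := hL.exists_stable_label hσ
  exact hM.dom_of_append (Part.eq_some_iff.1 (hstable K le_rfl)).1

theorem append_eq_of_snu (hM : Iterative M) (hL : ExLearns M L)
    (hsnu : ∀ I, IsInformant L I → SNUOn M I) (hσ : CorrectFor L σ) (hτ : CorrectFor L τ)
    {e : ℕ} (he : W e = L) (h : M σ = Part.some e) : M (σ ++ τ) = Part.some e := by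
  have hστ := hσ.append hτ
  have hI : IsInformant L (prepend (σ ++ τ) (label L)) :=
    isInformant_prepend hστ (labeledBy_label L) fun z => Or.inr ⟨z, rfl⟩
  have hseg : seg (prepend (σ ++ τ) (label L)) σ.length = σ := by
    refine (eq_seg_of_prefix_seg (t := (σ ++ τ).length) ?_).symm
    exact (seg_prepend_length (σ ++ τ) (label L)).symm ▸ List.prefix_append σ τ
  obtain ⟨K, e', he', hstable⟩ := hL.exists_stable_label hστ
  obtain ⟨d, hd⟩ := Part.dom_iff_mem.1 (hL.dom hM hστ)
  have hd := Part.eq_some_iff.2 hd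
  have heq : e = d := hsnu _ hI σ.length (σ ++ τ).length ((σ ++ τ).length + K)
    (by simp) (by omega) e d e' (by rw [hseg, h]) (by rw [seg_prepend_length, hd])
    (by rw [seg_prepend, hstable K le_rfl]) (by rw [he, hI.posI_eq]) (by rw [he', hI.posI_eq])
  rw [hd, heq]

/-! ### Ignoring every member of an infinite set -/

variable {B C : Set ℕ} {β : List Datum}

theorem labeledBy_insert_skip {D : Finset ℕ} {b : ℕ} (hb : b ∈ D) (t : ℕ) :
    LabeledBy (insert b C) (label C (skip D t)) := by
  refine (labeledBy_label C _).congr (Set.mem_insert_iff.trans (or_iff_right ?_)).symm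
  rintro (h : skip D t = b)
  exact skip_notMem D t (h ▸ hb)

theorem correctFor_insert_pos (b : ℕ) : CorrectFor (insert b C) [(b, true)] :=
  correctFor_singleton (by simp [LabeledBy])

theorem exists_ignored_neg (hM : Iterative M) (hB : B.Nonempty) (hBC : Disjoint B C)
    (hL : ∀ b ∈ B, ExLearns M (insert b C)) (hβ : ∀ b ∈ B, CorrectFor (insert b C) β)
    (hign : ∀ b ∈ B, M (β ++ [(b, true)]) = M β) :
    ∃ τ N, (∀ d ∈ τ, LabeledBy C d ∧ d.1 ≤ N) ∧
      ∀ q ∈ B, N < q → M (β ++ τ ++ [(q, false)]) = M (β ++ τ) := by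
  obtain ⟨b, hb⟩ := hB
  obtain ⟨K, e, -, hstable⟩ := (hL b hb).exists_stable
    (f := fun t => label C (skip {b} t)) ((hβ b hb).append (correctFor_insert_pos b))
    (fun t => labeledBy_insert_skip (Finset.mem_singleton_self b) t) (fun z => by
      by_cases hz : z = b
      · simp [hz]
      · exact Or.inr ⟨z, skip_of_notMem (by simpa using hz)⟩)
  have hval : ∀ k ≥ K, M (β ++ seg (fun t => label C (skip {b} t)) k) = Part.some e :=
    fun k hk => (hM.congr_append (hign b hb) _).symm.trans (hstable k hk)
  refine ⟨seg (fun t => label C (skip {b} t)) K, max b K, fun d hd => ?_, fun q hq hlt => ?_⟩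
  · obtain ⟨i, hi, rfl⟩ := mem_seg.1 hd
    refine ⟨labeledBy_label C _, ?_⟩
    change skip {b} i ≤ _
    unfold skip
    split_ifs with h
    · simp only [Finset.mem_singleton, Finset.sup_singleton, id] at h ⊢
      omega
    · omega
  · have hqb : q ∉ ({b} : Finset ℕ) := by simp; omega
    have hneg : label C (skip {b} q) = (q, false) := by
      rw [skip_of_notMem hqb, label_of_notMem (hBC.notMem_of_mem_left hq)]
    have hKq := (hval K le_rfl).trans (hval q (by omega)).symm
    rw [hM.congr_append hKq, hval K le_rfl, ← hval (q + 1) (by omega), seg_succ, hneg,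
      List.append_assoc]

theorem exists_stable_of_ignored (hM : Iterative M) {b c : ℕ} {D : Finset ℕ} (hD : D = {b, c})
    (hL : ExLearns M (insert b C)) (hβ : CorrectFor (insert b C) β)
    (hτ : CorrectFor (insert b C) τ) (hc : c ∉ insert b C)
    (hpos : M (β ++ [(b, true)]) = M β) (hneg : M (β ++ τ ++ [(c, false)]) = M (β ++ τ)) :
    ∃ K e, W e = insert b C ∧
      ∀ k ≥ K, M (β ++ τ ++ seg (fun t => label C (skip D t)) k) = Part.some e := by
  have hcneg : CorrectFor (insert b C) [(c, false)] :=
    correctFor_singleton (by simpa [LabeledBy] using hc)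
  have hpre : M (β ++ [(b, true)] ++ τ ++ [(c, false)]) = M (β ++ τ) :=
    (hM.congr_append (hM.congr_append hpos τ) _).trans hneg
  obtain ⟨K, e, he, hK⟩ := hL.exists_stable (f := fun t => label C (skip D t))
    (((hβ.append (correctFor_insert_pos b)).append hτ).append hcneg)
    (fun t => labeledBy_insert_skip (by simp [hD]) t) (fun z => by
      by_cases hz : z ∈ D
      · rw [hD, Finset.mem_insert, Finset.mem_singleton] at hz
        rcases hz with rfl | rfl <;> simp
      · exact Or.inr ⟨z, skip_of_notMem hz⟩)
  exact ⟨K, e, he, fun k hk => (hM.congr_append hpre _).symm.trans (hK k hk)⟩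

-- Two languages `insert p C` and `insert q C` receive informants on which `M` behaves alike:
-- one presents `p` positively and `q` negatively, the other swaps them, and `M` ignores both.
theorem not_learns_insert_of_ignored (hM : Iterative M) (hB : B.Infinite) (hBC : Disjoint B C)
    (hβ : ∀ b ∈ B, CorrectFor (insert b C) β) (hign : ∀ b ∈ B, M (β ++ [(b, true)]) = M β) :
    ¬ ∀ b ∈ B, ExLearns M (insert b C) := by
  intro hL
  obtain ⟨τ, N, hτ, hneg⟩ := exists_ignored_neg hM hB.nonempty hBC hL hβ hign
  obtain ⟨p, hp, hNp⟩ := hB.exists_gt N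
  obtain ⟨q, hq, hpq⟩ := hB.exists_gt p
  have hτb : ∀ b, N < b → CorrectFor (insert b C) τ := fun b hb d hd =>
    (hτ d hd).1.congr (by simp [((hτ d hd).2.trans_lt hb).ne])
  have hpC : p ∉ insert q C := by simp [hpq.ne, hBC.notMem_of_mem_left hp]
  have hqC : q ∉ insert p C := by simp [hpq.ne', hBC.notMem_of_mem_left hq]
  have hNq : N < q := hNp.trans hpq
  obtain ⟨K, e, he, hK⟩ := exists_stable_of_ignored hM (D := {p, q}) rfl (hL p hp) (hβ p hp)
    (hτb p hNp) hqC (hign p hp) (hneg q hq hNq)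
  obtain ⟨K', e', he', hK'⟩ := exists_stable_of_ignored hM (Finset.pair_comm p q) (hL q hq)
    (hβ q hq) (hτb q hNq) hpC (hign q hq) (hneg p hp hNp)
  have hee' : e = e' := Part.some_injective
    ((hK (max K K') (le_max_left _ _)).symm.trans (hK' (max K K') (le_max_right _ _)))
  exact hpC (he' ▸ hee' ▸ he.symm ▸ Set.mem_insert p C)

end IterativeLearners

/-! ### Learning with finitely many changes of state -/

section Stabilizing

variable {α : Type*} [Primcodable α]

theorem exists_computable_index {hyp : α → Set ℕ}
    (hhyp : REPred fun p : α × ℕ => p.2 ∈ hyp p.1) :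
    ∃ index : α → ℕ, Computable index ∧ Function.Injective index ∧ ∀ a, W (index a) = hyp a := by
  obtain ⟨c, hc⟩ := Code.exists_code.1 hhyp
  refine ⟨fun a => Encodable.encode (Code.curry c (Encodable.encode a)), ?_, fun a b hab => ?_,
    fun a => ?_⟩
  · exact (Primrec.encode.comp
      (Code.primrec₂_curry.comp (Primrec.const c) Primrec.encode)).to_comp
  · exact Encodable.encode_injective (Code.curry_inj (Encodable.encode_injective hab)).2
  · ext z
    simp [W, Code.eval_curry, hc, Part.assert, Part.bind]

theorem exists_partrec_leftInverse {f : α → ℕ} (hf : Computable f) (hinj : Function.Injective f) :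
    ∃ g : ℕ →. α, Partrec g ∧ ∀ a, g (f a) = Part.some a := by
  let search (m k : ℕ) : Option α :=
    (Encodable.decode k).bind fun a => bif decide (f a = m) then some a else none
  have hsearch : Computable₂ search :=
    Computable.option_bind (Computable.decode.comp Computable.snd) (Computable.cond
      (Primrec.eq.decide.to_comp.comp (hf.comp Computable.snd)
        (Computable.fst.comp Computable.fst))
      (Computable.option_some.comp Computable.snd) (Computable.const none)).to₂
  refine ⟨fun m => Nat.rfindOpt (search m), Partrec.rfindOpt hsearch, fun a => ?_⟩
  have hdom : (Nat.rfindOpt (search (f a))).Dom :=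
    Nat.rfindOpt_dom.2 ⟨Encodable.encode a, a, by simp [search]⟩
  have hunique : ∀ b k, b ∈ search (f a) k → b = a := by
    intro b k hb
    obtain ⟨c, -, hc⟩ := Option.bind_eq_some_iff.1 hb
    by_cases h : f c = f a
    · simp only [h, decide_true, cond_true, Option.some.injEq] at hc
      exact hc ▸ hinj h
    · simp [h] at hc
  obtain ⟨b, hb⟩ := Part.dom_iff_mem.1 hdom
  obtain ⟨k, hk⟩ := Nat.rfindOpt_spec hb
  exact Part.eq_some_iff.2 (hunique b k hk ▸ hb)

theorem itInfEx_of_stabilizing {step : α → Datum → α} (hstep : Primrec₂ step) (init : α)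
    {hyp : α → Set ℕ} (hhyp : REPred fun p : α × ℕ => p.2 ∈ hyp p.1) {𝓛 : Set (Set ℕ)}
    (h : ∀ L ∈ 𝓛, ∀ I, IsInformant L I →
      ∃ s, hyp s = L ∧ ∀ᶠ t in atTop, (seg I t).foldl step init = s) :
    ItInfEx 𝓛 := by
  obtain ⟨index, hindex, hinj, hW⟩ := exists_computable_index hhyp
  obtain ⟨state, hstate, hinv⟩ := exists_partrec_leftInverse hindex hinj
  have hfold : Primrec fun σ : List Datum => σ.foldl step init :=
    Primrec.list_foldl Primrec.id (Primrec.const init)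
      (hstep.comp (Primrec.fst.comp Primrec.snd) (Primrec.snd.comp Primrec.snd)).to₂
  refine ⟨fun σ => Part.some (index (σ.foldl step init)), hindex.comp hfold.to_comp,
    ⟨fun p => (state p.1).map fun s => index (step s p.2), ?_, fun σ d => ?_⟩, fun L hL I hI => ?_⟩
  · exact (hstate.comp Computable.fst).map (hindex.comp
      (hstep.to_comp.comp Computable.snd (Computable.snd.comp Computable.fst))).to₂
  · simp [hinv]
  · obtain ⟨s, hs, hev⟩ := h L hL I hI
    obtain ⟨t₀, ht₀⟩ := eventually_atTop.1 hev
    exact ⟨t₀, index s, (hW s).trans hs, fun t ht => congrArg (Part.some ∘ index) (ht₀ t ht)⟩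

end Stabilizing

theorem eventually_const_of_bounded_rank {α : Type*} {f : ℕ → α} (rank : α → ℕ)
    (hstep : ∀ t, f (t + 1) = f t ∨ rank (f t) < rank (f (t + 1)))
    (hbdd : BddAbove (Set.range (rank ∘ f))) : ∃ a, ∀ᶠ t in atTop, f t = a := by
  obtain ⟨T, hT⟩ := Nat.sSup_mem (Set.range_nonempty _) hbdd
  have hmax : ∀ t, rank (f t) ≤ rank (f T) := fun t => (le_csSup hbdd ⟨t, rfl⟩).trans_eq hT.symm
  refine ⟨f T, eventually_atTop.2 ⟨T, fun t ht => ?_⟩⟩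
  induction t, ht using Nat.le_induction with
  | base => rfl
  | succ t _ ih => exact (hstep t).elim (·.trans ih) fun h => absurd (ih ▸ h) (hmax _).not_gt

/-! ### The diagonalizing process -/

/-- The numbers of column `n` with odd second coordinate. -/
def oddColumn (n : ℕ) : Set ℕ := {z | z.unpair.1 = n ∧ z.unpair.2 % 2 = 1}

instance (n : ℕ) : DecidablePred (· ∈ oddColumn n) := fun z =>
  inferInstanceAs (Decidable (z.unpair.1 = n ∧ z.unpair.2 % 2 = 1))

theorem le_of_unpair_fst_eq {n z : ℕ} (h : z.unpair.1 = n) : n ≤ z :=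
  h ▸ Nat.unpair_left_le z

theorem oddColumn_infinite (n : ℕ) : (oddColumn n).Infinite := by
  refine Set.infinite_of_injective_forall_mem (f := fun k => Nat.pair n (2 * k + 1))
    (fun a b hab => ?_) fun k => ?_
  · have := (Nat.pair_eq_pair.1 hab).2
    omega
  · simp [oddColumn]

/-- The outcome within `k` steps of program `n.unpair.1` on `n` and the list `l`. The program is
meant to return the conjecture of a learner that has been shown `l`; column `n` diagonalizes
against that learner. -/
def query (n k : ℕ) (l : List ℕ) : Option ℕ :=
  Code.evaln k (Denumerable.ofNat Code n.unpair.1) (Nat.pair n (Encodable.encode l))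

/-- The part of `l` that lies below `x` and avoids `A`. -/
def clean (x : ℕ) (A l : List ℕ) : List ℕ := l.filter fun z => z < x ∧ z ∉ A

/-- The list tried at time `x`. Every list avoiding `A` is tried at infinitely many times. -/
def trial (x : ℕ) (A : List ℕ) : List ℕ := clean x A (Denumerable.ofNat (List ℕ) x.unpair.1)

/-- Within `k` steps it is seen that, after `v`, showing `l` changes the conjecture, and that
showing `A` next does not change it again. -/
def Succeeds (n k : ℕ) (A v l : List ℕ) : Prop :=
  (query n k v).isSome ∧ (query n k (v ++ l)).isSome ∧ query n k v ≠ query n k (v ++ l) ∧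
    query n k (v ++ l ++ A) = query n k (v ++ l)

instance (n k : ℕ) (A v l : List ℕ) : Decidable (Succeeds n k A v l) :=
  inferInstanceAs (Decidable (_ ∧ _))

/-- The two lists maintained for column `n` at time `x`: the anomalies, and the numbers shown to
the learner. Each success shows everything below `x` and creates a new anomaly, above `x`. -/
def process (n : ℕ) : ℕ → List ℕ × List ℕ
  | 0 => ([Nat.pair n 0], [])
  | x + 1 =>
    let A := (process n x).1
    let v := (process n x).2
    if Succeeds n x.unpair.2 A v (trial x A) then
      (Nat.pair n (2 * (x + 1)) :: A, v ++ (trial x A ++ (A ++ clean x A (List.range x))))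
    else (A, v)

/-- The anomalies of column `n` before time `x`, latest first. -/
def anomalies (n x : ℕ) : List ℕ := (process n x).1

/-- The numbers shown before time `x` to the learner that column `n` diagonalizes against. -/
def shown (n x : ℕ) : List ℕ := (process n x).2

/-- One more than the number of successes before time `x`. -/
def stage (n x : ℕ) : ℕ := (anomalies n x).length

/-- The process for column `n` succeeds at time `x`. -/
def Advances (n x : ℕ) : Prop :=
  Succeeds n x.unpair.2 (anomalies n x) (shown n x) (trial x (anomalies n x))

/-- The shown numbers other than anomalies. -/
def visible (n x : ℕ) : List ℕ := (shown n x).filter (· ∉ anomalies n x)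

section PrimitiveRecursion

theorem primrecRel_list_mem : PrimrecRel fun (z : ℕ) (A : List ℕ) => z ∈ A :=
  ((PrimrecRel.exists_mem_list (R := fun a b : ℕ => a = b) Primrec.eq).comp
    Primrec.snd Primrec.fst).of_eq fun _ => by simp

theorem primrecRel_mem_oddColumn : PrimrecRel fun z n : ℕ => z ∈ oddColumn n :=
  (Primrec.eq.comp (Primrec.fst.comp (Primrec.unpair.comp Primrec.fst)) Primrec.snd).and
    (Primrec.eq.comp (Primrec.nat_mod.comp (Primrec.snd.comp (Primrec.unpair.comp Primrec.fst))
      (Primrec.const 2)) (Primrec.const 1))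

variable {α : Type*} [Primcodable α] {n k x : α → ℕ} {A v l : α → List ℕ}

theorem primrec_query (hn : Primrec n) (hk : Primrec k) (hl : Primrec l) :
    Primrec fun a => query (n a) (k a) (l a) :=
  Code.primrec_evaln.comp
    ((hk.pair ((Primrec.ofNat Code).comp (Primrec.fst.comp (Primrec.unpair.comp hn)))).pair
      (Primrec₂.natPair.comp hn (Primrec.encode.comp hl)))

theorem primrec_clean (hx : Primrec x) (hA : Primrec A) (hl : Primrec l) :
    Primrec fun a => clean (x a) (A a) (l a) := by
  have hkeep : PrimrecRel fun (z : ℕ) (p : ℕ × List ℕ) => z < p.1 ∧ z ∉ p.2 :=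
    (Primrec.nat_lt.comp Primrec.fst (Primrec.fst.comp Primrec.snd)).and
      (primrecRel_list_mem.comp Primrec.fst (Primrec.snd.comp Primrec.snd)).not
  exact hkeep.listFilter.comp hl (hx.pair hA)

theorem primrec_trial (hx : Primrec x) (hA : Primrec A) :
    Primrec fun a => trial (x a) (A a) :=
  primrec_clean hx hA ((Primrec.ofNat (List ℕ)).comp (Primrec.fst.comp (Primrec.unpair.comp hx)))

theorem primrecPred_succeeds (hn : Primrec n) (hk : Primrec k) (hA : Primrec A) (hv : Primrec v)
    (hl : Primrec l) : PrimrecPred fun a => Succeeds (n a) (k a) (A a) (v a) (l a) := by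
  have hvl := Primrec.list_append.comp hv hl
  have hisSome {o : α → Option ℕ} (ho : Primrec o) : PrimrecPred fun a => (o a).isSome = true :=
    Primrec.eq.comp (Primrec.option_isSome.comp ho) (Primrec.const true)
  have hqv := primrec_query hn hk hv
  have hqvl := primrec_query hn hk hvl
  have hqvlA := primrec_query hn hk (Primrec.list_append.comp hvl hA)
  exact (hisSome hqv).and ((hisSome hqvl).and
    ((Primrec.eq.comp hqv hqvl).not.and (Primrec.eq.comp hqvlA hqvl)))

theorem primrec_process : Primrec₂ process := by
  have hn : Primrec fun p : ℕ × ℕ × List ℕ × List ℕ => p.1 := Primrec.fst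
  have hx : Primrec fun p : ℕ × ℕ × List ℕ × List ℕ => p.2.1 := Primrec.fst.comp Primrec.snd
  have hS : Primrec fun p : ℕ × ℕ × List ℕ × List ℕ => p.2.2 := Primrec.snd.comp Primrec.snd
  have hA := Primrec.fst.comp hS
  have hv := Primrec.snd.comp hS
  have hl := primrec_trial hx hA
  have hnew : Primrec fun p : ℕ × ℕ × List ℕ × List ℕ => Nat.pair p.1 (2 * (p.2.1 + 1)) :=
    Primrec₂.natPair.comp hn (Primrec.nat_mul.comp (Primrec.const 2) (Primrec.succ.comp hx))
  have hrest := Primrec.list_append.comp hA (primrec_clean hx hA (Primrec.list_range.comp hx))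
  have hshown := Primrec.list_append.comp hv (Primrec.list_append.comp hl hrest)
  have hstep := Primrec.ite
    (primrecPred_succeeds hn (Primrec.snd.comp (Primrec.unpair.comp hx)) hA hv hl)
    ((Primrec.list_cons.comp hnew hA).pair hshown) hS
  have hzero : Primrec fun n : ℕ => (([Nat.pair n 0], []) : List ℕ × List ℕ) :=
    (Primrec.list_cons.comp (Primrec₂.natPair.comp Primrec.id (Primrec.const 0))
      (Primrec.const [])).pair (Primrec.const [])
  refine (Primrec.nat_rec hzero hstep.to₂).of_eq fun n x => ?_
  induction x with
  | zero => rfl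
  | succ x ih => rw [process, ← ih]

theorem primrec_anomalies : Primrec₂ anomalies := Primrec.fst.comp primrec_process

theorem primrec_shown : Primrec₂ shown := Primrec.snd.comp primrec_process

theorem primrec_stage : Primrec₂ stage := Primrec.list_length.comp primrec_anomalies

end PrimitiveRecursion

section ProcessLemmas

variable {n x y z s : ℕ}

theorem mem_clean {A l : List ℕ} : z ∈ clean x A l ↔ z ∈ l ∧ z < x ∧ z ∉ A := by
  simp [clean]

theorem process_succ_of_advances (h : Advances n x) :
    anomalies n (x + 1) = Nat.pair n (2 * (x + 1)) :: anomalies n x ∧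
      shown n (x + 1) = shown n x ++ (trial x (anomalies n x) ++
        (anomalies n x ++ clean x (anomalies n x) (List.range x))) := by
  constructor
  · exact congrArg Prod.fst (if_pos h)
  · exact congrArg Prod.snd (if_pos h)

theorem process_succ_of_not_advances (h : ¬ Advances n x) : process n (x + 1) = process n x :=
  if_neg h

theorem anomalies_succ_of_not_advances (h : ¬ Advances n x) :
    anomalies n (x + 1) = anomalies n x :=
  congrArg Prod.fst (process_succ_of_not_advances h)

theorem shown_succ_of_not_advances (h : ¬ Advances n x) : shown n (x + 1) = shown n x :=
  congrArg Prod.snd (process_succ_of_not_advances h)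

theorem process_eq_of_not_advances (h : ∀ x ≥ s, ¬ Advances n x) (hx : s ≤ x) :
    process n x = process n s := by
  induction x, hx using Nat.le_induction with
  | base => rfl
  | succ x hx ih => rw [process_succ_of_not_advances (h x hx), ih]

theorem anomalies_succ_cases (n x : ℕ) : anomalies n (x + 1) = anomalies n x ∨
    anomalies n (x + 1) = Nat.pair n (2 * (x + 1)) :: anomalies n x := by
  by_cases h : Advances n x
  · exact .inr (process_succ_of_advances h).1
  · exact .inl (anomalies_succ_of_not_advances h)

theorem anomalies_suffix_anomalies (n : ℕ) (h : x ≤ y) : anomalies n x <:+ anomalies n y := by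
  induction y, h using Nat.le_induction with
  | base => exact List.suffix_rfl
  | succ y _ ih =>
    rcases anomalies_succ_cases n y with h | h <;> rw [h]
    · exact ih
    · exact ih.trans (List.suffix_cons _ _)

theorem stage_mono (n : ℕ) : Monotone (stage n) :=
  fun _ _ h => (anomalies_suffix_anomalies n h).length_le

theorem stage_le_of_not_advances (h : ∀ x ≥ s, ¬ Advances n x) (x : ℕ) :
    stage n x ≤ stage n s := by
  rcases le_total x s with hx | hx
  · exact stage_mono n hx
  · rw [stage, anomalies, process_eq_of_not_advances h hx, stage, anomalies]

theorem shown_prefix_shown (n : ℕ) (h : x ≤ y) : shown n x <+: shown n y := by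
  induction y, h using Nat.le_induction with
  | base => exact List.prefix_rfl
  | succ y _ ih =>
    refine ih.trans ?_
    by_cases h : Advances n y
    · exact (process_succ_of_advances h).2 ▸ List.prefix_append _ _
    · exact shown_succ_of_not_advances h ▸ List.prefix_rfl

theorem pair_zero_mem_anomalies (n x : ℕ) : Nat.pair n 0 ∈ anomalies n x :=
  (anomalies_suffix_anomalies n (Nat.zero_le x)).subset (List.mem_singleton_self _)

theorem stage_pos (n x : ℕ) : 0 < stage n x :=
  List.length_pos_of_mem (pair_zero_mem_anomalies n x)

theorem unpair_of_mem_anomalies (h : z ∈ anomalies n x) :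
    z.unpair.1 = n ∧ z.unpair.2 % 2 = 0 := by
  induction x with
  | zero =>
    rw [List.mem_singleton.1 h]
    simp
  | succ x ih =>
    rcases anomalies_succ_cases n x with heq | heq <;> rw [heq] at h
    · exact ih h
    · rcases List.mem_cons.1 h with rfl | h
      · simp
      · exact ih h

theorem notMem_oddColumn_of_mem_anomalies (h : z ∈ anomalies n x) : z ∉ oddColumn n := fun hz => by
  have := (unpair_of_mem_anomalies h).2.symm.trans hz.2
  omega

theorem lt_new_anomaly (n x : ℕ) : x < Nat.pair n (2 * (x + 1)) :=
  lt_of_lt_of_le (by omega) (Nat.right_le_pair n (2 * (x + 1)))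

theorem mem_anomalies_self (h : z ∈ anomalies n x) : z ∈ anomalies n z := by
  induction x with
  | zero => exact List.mem_singleton.1 h ▸ pair_zero_mem_anomalies _ _
  | succ x ih =>
    by_cases hold : z ∈ anomalies n x
    · exact ih hold
    · have hz : z = Nat.pair n (2 * (x + 1)) :=
        (anomalies_succ_cases n x).elim (fun heq => absurd (heq ▸ h) hold)
          fun heq => (List.mem_cons.1 (heq ▸ h)).resolve_right hold
      have hxz : x + 1 ≤ z := hz ▸ lt_new_anomaly n x
      exact (anomalies_suffix_anomalies n hxz).subset h

theorem exists_advances_of_mem_shown (h : z ∈ shown n x) (hz : z ∉ anomalies n x) :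
    ∃ y, Advances n y ∧ z < y ∧ y < x := by
  induction x with
  | zero => cases h
  | succ x ih =>
    have hz' : z ∉ anomalies n x := fun h => hz ((anomalies_suffix_anomalies n x.le_succ).subset h)
    have hold : z ∈ shown n x → ∃ y, Advances n y ∧ z < y ∧ y < x + 1 := fun h =>
      (ih h hz').imp fun y hy => ⟨hy.1, hy.2.1, hy.2.2.trans x.lt_succ_self⟩
    by_cases hadv : Advances n x
    · rw [(process_succ_of_advances hadv).2] at h
      simp only [trial, List.mem_append, mem_clean, hz', false_or] at h
      rcases h with h | h | h
      · exact hold h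
      · exact ⟨x, hadv, h.2.1, x.lt_succ_self⟩
      · exact ⟨x, hadv, h.2.1, x.lt_succ_self⟩
    · exact hold (shown_succ_of_not_advances hadv ▸ h)

theorem stage_succ_of_advances (h : Advances n x) : stage n (x + 1) = stage n x + 1 := by
  rw [stage, (process_succ_of_advances h).1, List.length_cons, stage]

theorem stage_lt_of_mem_shown (h : z ∈ shown n x) (hz : z ∉ anomalies n x) :
    stage n z < stage n x := by
  obtain ⟨y, hy, hzy, hyx⟩ := exists_advances_of_mem_shown h hz
  calc stage n z ≤ stage n y := stage_mono n hzy.le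
    _ < stage n (y + 1) := stage_succ_of_advances hy ▸ Nat.lt_succ_self _
    _ ≤ stage n x := stage_mono n hyx

theorem mem_shown_succ_of_advances (h : Advances n x) (hz : z < x) :
    z ∈ shown n (x + 1) := by
  rw [(process_succ_of_advances h).2]
  by_cases hA : z ∈ anomalies n x <;> simp [mem_clean, hA, hz]

theorem visible_succ_of_advances (h : Advances n x) :
    visible n (x + 1) = visible n x ++
      (trial x (anomalies n x) ++ clean x (anomalies n x) (List.range x)) := by
  have hkeep : ∀ z < x, z ∉ anomalies n (x + 1) ↔ z ∉ anomalies n x := fun z hz => by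
    simp [(process_succ_of_advances h).1, (hz.trans (lt_new_anomaly n x)).ne]
  have hshown : (shown n x).filter (· ∉ anomalies n (x + 1)) = visible n x := by
    refine List.filter_congr fun z hz => decide_eq_decide.2 ⟨fun h' hA => ?_, fun h' => ?_⟩
    · exact h' ((anomalies_suffix_anomalies n x.le_succ).subset hA)
    · obtain ⟨y, -, hzy, hyx⟩ := exists_advances_of_mem_shown hz h'
      exact (hkeep z (hzy.trans hyx)).2 h'
  have hclean : ∀ l, (clean x (anomalies n x) l).filter (· ∉ anomalies n (x + 1)) =
      clean x (anomalies n x) l := fun l =>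
    List.filter_eq_self.2 fun z hz =>
      decide_eq_true ((hkeep z (mem_clean.1 hz).2.1).2 (mem_clean.1 hz).2.2)
  have hanomalies : (anomalies n x).filter (· ∉ anomalies n (x + 1)) = [] :=
    List.filter_eq_nil_iff.2 fun z hz => by
      simpa using (anomalies_suffix_anomalies n x.le_succ).subset hz
  rw [visible, (process_succ_of_advances h).2, List.filter_append, List.filter_append,
    List.filter_append, hshown, trial, hclean, hclean, hanomalies, List.nil_append]

theorem frequently_mem_anomalies_self (h : ∃ᶠ x in atTop, Advances n x) :
    ∃ᶠ a in atTop, a ∈ anomalies n a := by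
  refine frequently_atTop.2 fun N => ?_
  obtain ⟨x, hNx, hx⟩ := frequently_atTop.1 h N
  have hmem : Nat.pair n (2 * (x + 1)) ∈ anomalies n (x + 1) :=
    (process_succ_of_advances hx).1 ▸ List.mem_cons_self
  exact ⟨_, le_trans hNx (lt_new_anomaly n x).le, mem_anomalies_self hmem⟩

end ProcessLemmas

/-! ### The separating class and its learner -/

/-- The anomalies of column `n` at time `x`, and the odd numbers of the column shown by then. -/
def core (n x : ℕ) : Set ℕ := {z | z ∈ anomalies n x} ∪ oddColumn n ∩ {z | z ∈ shown n x}

/-- The finite language associated with column `n` and its odd member `b`. -/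
def finiteVariant (n b : ℕ) : Set ℕ := insert b (core n b)

/-- The odd number `b` of column `n` lies beyond all successes of the process for the column. -/
def Settled (n b : ℕ) : Prop := b ∈ oddColumn n ∧ ∀ x ≥ b, ¬ Advances n x

/-- The class that separates the two learning criteria: `∅`, the odd
parts of the columns, and their finite variants at settled numbers. -/
def separatingClass : Set (Set ℕ) :=
  {L | L = ∅ ∨ (∃ n, L = oddColumn n) ∨ ∃ n b, Settled n b ∧ L = finiteVariant n b}

/-- The memory of the learner after the first positive datum: the column of that datum, the label
of the first anomaly received since, and an odd number of the column of maximal stage among the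
positive ones. -/
abbrev ColumnState := ℕ × Option Bool × Option ℕ

/-- The stage of the candidate `c`, or `0` in the absence of a candidate. -/
def candidateStage (n : ℕ) (c : Option ℕ) : ℕ := (c.map (stage n)).getD 0

/-- The reaction of the learner to a datum. Once an anomaly is known to be absent the state is
frozen, since then the language is the odd part of the column. -/
def columnUpdate (p : ColumnState) (d : Datum) : ColumnState :=
  if d.1 ∈ oddColumn p.1 ∧ d.2 = true ∧ p.2.1 ≠ some false ∧
      candidateStage p.1 p.2.2 < stage p.1 d.1 then
    (p.1, p.2.1, some d.1)
  else if d.1 ∈ anomalies p.1 d.1 ∧ p.2.1 = none then (p.1, some d.2, p.2.2)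
  else p

/-- The reaction of the learner to a datum, where `none` is its state before the first positive
datum. -/
def learnerUpdate : Option ColumnState → Datum → Option ColumnState
  | none, d => if d.2 = true then some (columnUpdate (d.1.unpair.1, none, none) d) else none
  | some p, d => some (columnUpdate p d)

/-- The conjecture in the state `p`. -/
def columnHypothesis (p : ColumnState) : Set ℕ :=
  if p.2.1 = some true then finiteVariant p.1 (p.2.2.getD 0) else oddColumn p.1

/-- The conjecture of the learner. -/
def hypothesis (s : Option ColumnState) : Set ℕ := {z | ∃ p ∈ s, z ∈ columnHypothesis p}

section LearnerPrimrec

theorem primrec_candidateStage : Primrec₂ candidateStage :=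
  Primrec.option_getD.comp (Primrec.option_map Primrec.snd
    (primrec_stage.comp (Primrec.fst.comp Primrec.fst) Primrec.snd).to₂) (Primrec.const 0)

theorem primrec_columnUpdate : Primrec₂ columnUpdate := by
  have hn : Primrec fun q : ColumnState × Datum => q.1.1 := Primrec.fst.comp Primrec.fst
  have hv : Primrec fun q : ColumnState × Datum => q.1.2.1 :=
    Primrec.fst.comp (Primrec.snd.comp Primrec.fst)
  have hc : Primrec fun q : ColumnState × Datum => q.1.2.2 :=
    Primrec.snd.comp (Primrec.snd.comp Primrec.fst)
  have hz : Primrec fun q : ColumnState × Datum => q.2.1 := Primrec.fst.comp Primrec.snd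
  have hy : Primrec fun q : ColumnState × Datum => q.2.2 := Primrec.snd.comp Primrec.snd
  have hodd := primrecRel_mem_oddColumn.comp hz hn
  have hpos := Primrec.eq.comp hy (Primrec.const true)
  have hrejected := Primrec.eq.comp hv (Primrec.const (some false))
  have hstage := Primrec.nat_lt.comp (primrec_candidateStage.comp hn hc) (primrec_stage.comp hn hz)
  have hanomaly := primrecRel_list_mem.comp hz (primrec_anomalies.comp hn hz)
  have hundecided := Primrec.eq.comp hv (Primrec.const none)
  exact Primrec.ite (hodd.and (hpos.and (hrejected.not.and hstage)))
    (hn.pair (hv.pair (Primrec.option_some.comp hz)))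
    (Primrec.ite (hanomaly.and hundecided)
      (hn.pair ((Primrec.option_some.comp hy).pair hc)) Primrec.fst)

theorem primrec_learnerUpdate : Primrec₂ learnerUpdate := by
  have hd : Primrec fun q : Option ColumnState × Datum => q.2 := Primrec.snd
  have hstart : Primrec fun q : Option ColumnState × Datum =>
      ((q.2.1.unpair.1, none, none) : ColumnState) :=
    (Primrec.fst.comp (Primrec.unpair.comp (Primrec.fst.comp hd))).pair (Primrec.const (none, none))
  have hnone := Primrec.ite (Primrec.eq.comp (Primrec.snd.comp hd) (Primrec.const true))
    (Primrec.option_some.comp (primrec_columnUpdate.comp hstart hd)) (Primrec.const none)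
  have hsome : Primrec₂ fun (q : Option ColumnState × Datum) (p : ColumnState) =>
      some (columnUpdate p q.2) :=
    (Primrec.option_some.comp (primrec_columnUpdate.comp Primrec.snd (hd.comp Primrec.fst))).to₂
  refine (Primrec.option_casesOn Primrec.fst hnone hsome).of_eq ?_
  rintro ⟨_ | p, d⟩ <;> rfl

theorem primrecRel_mem_finiteVariant :
    PrimrecRel fun (z : ℕ) (q : ℕ × ℕ) => z ∈ finiteVariant q.1 q.2 := by
  have hn : Primrec fun r : ℕ × ℕ × ℕ => r.2.1 := Primrec.fst.comp Primrec.snd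
  have hb : Primrec fun r : ℕ × ℕ × ℕ => r.2.2 := Primrec.snd.comp Primrec.snd
  exact (Primrec.eq.comp Primrec.fst hb).or
    ((primrecRel_list_mem.comp Primrec.fst (primrec_anomalies.comp hn hb)).or
      ((primrecRel_mem_oddColumn.comp Primrec.fst hn).and
        (primrecRel_list_mem.comp Primrec.fst (primrec_shown.comp hn hb))))

theorem primrecRel_mem_columnHypothesis :
    PrimrecRel fun (z : ℕ) (p : ColumnState) => z ∈ columnHypothesis p := by
  have hn : Primrec fun r : ℕ × ColumnState => r.2.1 := Primrec.fst.comp Primrec.snd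
  have hv : Primrec fun r : ℕ × ColumnState => r.2.2.1 :=
    Primrec.fst.comp (Primrec.snd.comp Primrec.snd)
  have hc : Primrec fun r : ℕ × ColumnState => r.2.2.2 :=
    Primrec.snd.comp (Primrec.snd.comp Primrec.snd)
  have hconfirmed := Primrec.eq.comp hv (Primrec.const (some true))
  have hvariant := primrecRel_mem_finiteVariant.comp Primrec.fst
    (hn.pair (Primrec.option_getD.comp hc (Primrec.const 0)))
  refine ((hconfirmed.and hvariant).or
    (hconfirmed.not.and (primrecRel_mem_oddColumn.comp Primrec.fst hn))).of_eq fun r => ?_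
  by_cases h : r.2.2.1 = some true <;> simp [columnHypothesis, h]

theorem rePred_mem_hypothesis :
    REPred fun q : Option ColumnState × ℕ => q.2 ∈ hypothesis q.1 := by
  have hp : Primrec fun q : Option ColumnState × ℕ => q.1.getD (0, none, none) :=
    Primrec.option_getD.comp Primrec.fst (Primrec.const (0, none, none))
  have hprim : PrimrecPred fun q : Option ColumnState × ℕ => q.2 ∈ hypothesis q.1 := by
    refine ((Primrec.eq.comp (Primrec.option_isSome.comp Primrec.fst) (Primrec.const true)).and
      (primrecRel_mem_columnHypothesis.comp Primrec.snd hp)).of_eq ?_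
    rintro ⟨_ | p, z⟩ <;> simp [hypothesis]
  exact hprim.computablePred.to_re

end LearnerPrimrec

section Convergence

variable {n b t : ℕ} {p : ColumnState} {d : Datum} {L : Set ℕ} {I : ℕ → Datum}

theorem columnUpdate_fst (p : ColumnState) (d : Datum) : (columnUpdate p d).1 = p.1 := by
  unfold columnUpdate
  split_ifs <;> rfl

theorem columnUpdate_of_rejected (h : p.2.1 = some false) : columnUpdate p d = p := by
  simp [columnUpdate, h]

theorem columnUpdate_verdict_of_ne_none (h : p.2.1 ≠ none) :
    (columnUpdate p d).2.1 = p.2.1 := by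
  unfold columnUpdate
  split_ifs with h₁ h₂
  · rfl
  · exact absurd h₂.2 h
  · rfl

theorem columnUpdate_verdict_cases (p : ColumnState) (d : Datum) :
    (columnUpdate p d).2.1 = p.2.1 ∨
      d.1 ∈ anomalies p.1 d.1 ∧ (columnUpdate p d).2.1 = some d.2 := by
  unfold columnUpdate
  split_ifs with h₁ h₂
  · exact .inl rfl
  · exact .inr ⟨h₂.1, rfl⟩
  · exact .inl rfl

theorem columnUpdate_verdict_ne_none (h : d.1 ∈ anomalies p.1 d.1) :
    (columnUpdate p d).2.1 ≠ none := by
  unfold columnUpdate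
  split_ifs with h₁ h₂
  · exact absurd h₁.1 (notMem_oddColumn_of_mem_anomalies h)
  · simp
  · exact fun hv => h₂ ⟨h, hv⟩

theorem columnUpdate_candidate_cases (p : ColumnState) (d : Datum) :
    (columnUpdate p d).2.2 = p.2.2 ∨
      (d.1 ∈ oddColumn p.1 ∧ d.2 = true) ∧ (columnUpdate p d).2.2 = some d.1 := by
  unfold columnUpdate
  split_ifs with h₁ h₂
  · exact .inr ⟨⟨h₁.1, h₁.2.1⟩, rfl⟩
  · exact .inl rfl
  · exact .inl rfl

theorem candidateStage_le_columnUpdate (p : ColumnState) (d : Datum) :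
    candidateStage p.1 p.2.2 ≤ candidateStage p.1 (columnUpdate p d).2.2 := by
  unfold columnUpdate
  split_ifs with h₁ h₂
  · exact h₁.2.2.2.le
  · exact le_rfl
  · exact le_rfl

theorem stage_le_candidateStage_columnUpdate (hd : d.1 ∈ oddColumn p.1) (hpos : d.2 = true)
    (hv : p.2.1 ≠ some false) :
    stage p.1 d.1 ≤ candidateStage p.1 (columnUpdate p d).2.2 := by
  unfold columnUpdate
  split_ifs with h₁ h₂
  · exact le_rfl
  · exact absurd hd (notMem_oddColumn_of_mem_anomalies h₂.1)
  · exact not_lt.1 fun h => h₁ ⟨hd, hpos, hv, h⟩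

/-- A quantity that grows with every change of the learner's state. -/
def rank : Option ColumnState → ℕ
  | none => 0
  | some p => candidateStage p.1 p.2.2 + (if p.2.1 = none then 0 else 1) + 1

theorem learnerUpdate_eq_or_rank_lt (s : Option ColumnState) (d : Datum) :
    learnerUpdate s d = s ∨ rank s < rank (learnerUpdate s d) := by
  rcases s with _ | p
  · by_cases h : d.2 = true
    · exact .inr (by simp [learnerUpdate, h, rank])
    · exact .inl (if_neg h)
  · simp only [learnerUpdate, columnUpdate]
    split_ifs with h₁ h₂
    · right
      simp only [rank, candidateStage, Option.map_some, Option.getD_some] at h₁ ⊢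
      omega
    · right
      simp [rank, h₂.2]
    · exact .inl rfl

/-- The state of the learner after the first `t` data of `I`. -/
def learnerState (I : ℕ → Datum) (t : ℕ) : Option ColumnState :=
  (seg I t).foldl learnerUpdate none

theorem learnerState_succ (I : ℕ → Datum) (t : ℕ) :
    learnerState I (t + 1) = learnerUpdate (learnerState I t) (I t) := by
  rw [learnerState, seg_succ, List.foldl_append]
  rfl

theorem learnerState_invariant (hI : IsInformant L I) {P : ColumnState → Prop}
    (hstart : ∀ z ∈ L, P (z.unpair.1, none, none))
    (hstep : ∀ p d, LabeledBy L d → P p → P (columnUpdate p d)) :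
    ∀ t, ∀ p ∈ learnerState I t, P p := by
  intro t
  induction t with
  | zero => simp [learnerState, seg]
  | succ t ih =>
    rw [learnerState_succ]
    rcases hs : learnerState I t with _ | p
    · intro p hp
      by_cases hpos : (I t).2 = true
      · rw [learnerUpdate, if_pos hpos, Option.mem_some_iff] at hp
        exact hp ▸ hstep _ _ (hI.1 t) (hstart _ ((hI.1 t).1 hpos))
      · simp [learnerUpdate, hpos] at hp
    · intro q hq
      rw [learnerUpdate, Option.mem_some_iff] at hq
      exact hq ▸ hstep _ _ (hI.1 t) (ih p hs)

theorem eventually_learnerState (hI : IsInformant L I) {P Q : ColumnState → Prop}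
    (hstart : ∀ z ∈ L, P (z.unpair.1, none, none))
    (hstep : ∀ p d, LabeledBy L d → P p → P (columnUpdate p d)) {z : ℕ} (hz : z ∈ L)
    (hreach : ∀ p, P p → Q (columnUpdate p (z, true)))
    (hkeep : ∀ p d, P p → Q p → Q (columnUpdate p d)) :
    ∀ᶠ t in atTop, ∃ p ∈ learnerState I t, P p ∧ Q p := by
  have hP := learnerState_invariant hI hstart hstep
  suffices ∀ᶠ t in atTop, ∃ p ∈ learnerState I t, Q p from
    this.mono fun t ⟨p, hp, hQ⟩ => ⟨p, hp, hP t p hp, hQ⟩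
  obtain ⟨t₀, ht₀⟩ := hI.2 z
  subst ht₀
  have hdatum : I t₀ = ((I t₀).1, true) := Prod.ext rfl ((hI.1 t₀).2 hz)
  refine eventually_atTop.2 ⟨t₀ + 1, fun t ht => ?_⟩
  induction t, ht using Nat.le_induction with
  | base =>
    rw [learnerState_succ, hdatum]
    rcases hs : learnerState I t₀ with _ | p
    · exact ⟨_, rfl, hreach _ (hstart _ hz)⟩
    · exact ⟨_, rfl, hreach p (hP t₀ p hs)⟩
  | succ t _ ih =>
    obtain ⟨p, hp, hQ⟩ := ih
    rw [learnerState_succ, Option.mem_def.1 hp]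
    exact ⟨_, rfl, hkeep p _ (hP t p hp) hQ⟩

theorem learns_empty (hI : IsInformant ∅ I) :
    ∃ s, hypothesis s = ∅ ∧ ∀ᶠ t in atTop, learnerState I t = s := by
  refine ⟨none, by simp [hypothesis], Eventually.of_forall fun t => ?_⟩
  exact Option.eq_none_iff_forall_not_mem.2
    (learnerState_invariant hI (P := fun _ => False) (by simp) (by simp) t)

/-- What the learner's states satisfy on informants for `oddColumn n`. -/
def OddInvariant (n : ℕ) (p : ColumnState) : Prop := p.1 = n ∧ p.2.1 ≠ some true

theorem OddInvariant.columnUpdate (hp : OddInvariant n p) (hd : LabeledBy (oddColumn n) d) :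
    OddInvariant n (columnUpdate p d) := by
  refine ⟨(columnUpdate_fst p d).trans hp.1, ?_⟩
  rcases columnUpdate_verdict_cases p d with h | ⟨hA, h⟩ <;> rw [h]
  · exact hp.2
  · have hneg : d.1 ∉ oddColumn n := notMem_oddColumn_of_mem_anomalies (hp.1 ▸ hA)
    simpa [LabeledBy, hneg] using hd

theorem eventually_oddInvariant (hI : IsInformant (oddColumn n) I) :
    ∀ᶠ t in atTop, ∃ p ∈ learnerState I t, OddInvariant n p := by
  obtain ⟨z, hz⟩ := (oddColumn_infinite n).nonempty
  exact (eventually_learnerState hI (P := OddInvariant n) (Q := fun _ => True)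
    (fun z hz => ⟨hz.1, by simp⟩) (fun p d hd hp => hp.columnUpdate hd) hz (by simp)
    (by simp)).mono fun t ⟨p, hp, hP, _⟩ => ⟨p, hp, hP⟩

theorem eventually_const_of_frequently_advances (hI : IsInformant (oddColumn n) I)
    (h : ∃ᶠ x in atTop, Advances n x) : ∃ s, ∀ᶠ t in atTop, learnerState I t = s := by
  obtain ⟨T, hT⟩ := eventually_atTop.1 (eventually_oddInvariant hI)
  obtain ⟨a, ha, t, hTt, rfl⟩ :=
    ((frequently_mem_anomalies_self h).and_eventually (hI.exists_late T)).exists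
  obtain ⟨p, hp, hcol, hv⟩ := hT t hTt
  have hq : learnerState I (t + 1) = some (columnUpdate p (I t)) := by
    rw [learnerState_succ, Option.mem_def.1 hp, learnerUpdate]
  have hinv := OddInvariant.columnUpdate ⟨hcol, hv⟩ (hI.1 t)
  have hrejected : (columnUpdate p (I t)).2.1 = some false := by
    have hdecided := columnUpdate_verdict_ne_none (p := p) (d := I t) (hcol.symm ▸ ha)
    rcases hval : (columnUpdate p (I t)).2.1 with _ | _ | _
    · exact absurd hval hdecided
    · rfl
    · exact absurd hval hinv.2
  refine ⟨some (columnUpdate p (I t)), eventually_atTop.2 ⟨t + 1, fun u hu => ?_⟩⟩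
  induction u, hu using Nat.le_induction with
  | base => exact hq
  | succ u _ ih => rw [learnerState_succ, ih, learnerUpdate, columnUpdate_of_rejected hrejected]

theorem eventually_const_of_eventually_not_advances (hI : IsInformant (oddColumn n) I)
    (h : ∀ᶠ x in atTop, ¬ Advances n x) : ∃ s, ∀ᶠ t in atTop, learnerState I t = s := by
  obtain ⟨x, hx⟩ := eventually_atTop.1 h
  have hcol := learnerState_invariant hI (P := fun p => p.1 = n) (fun z hz => hz.1)
    fun p d _ hp => (columnUpdate_fst p d).trans hp
  refine eventually_const_of_bounded_rank rank (fun t => ?_)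
    ⟨stage n x + 2, Set.forall_mem_range.2 fun t => ?_⟩
  · exact learnerState_succ I t ▸ learnerUpdate_eq_or_rank_lt _ _
  · rcases hs : learnerState I t with _ | ⟨m, v, c⟩
    · simp [hs, rank]
    · obtain rfl : m = n := hcol t _ hs
      have hc : candidateStage m c ≤ stage m x := by
        rcases c with _ | z
        · exact Nat.zero_le _
        · exact stage_le_of_not_advances hx z
      simp only [Function.comp_apply, hs, rank]
      split_ifs <;> omega

theorem learns_oddColumn (hI : IsInformant (oddColumn n) I) :
    ∃ s, hypothesis s = oddColumn n ∧ ∀ᶠ t in atTop, learnerState I t = s := by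
  obtain ⟨s, hs⟩ : ∃ s, ∀ᶠ t in atTop, learnerState I t = s := by
    by_cases h : ∃ᶠ x in atTop, Advances n x
    · exact eventually_const_of_frequently_advances hI h
    · exact eventually_const_of_eventually_not_advances hI (not_frequently.1 h)
  obtain ⟨t, rfl, p, hp, hcol, hv⟩ := (hs.and (eventually_oddInvariant hI)).exists
  exact ⟨_, by simp [hypothesis, Option.mem_def.1 hp, columnHypothesis, hv, hcol], hs⟩

theorem Settled.mem_anomalies (hb : Settled n b) {x z : ℕ} (h : z ∈ anomalies n x) :
    z ∈ anomalies n b := by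
  rcases le_total x b with hx | hx
  · exact (anomalies_suffix_anomalies n hx).subset h
  · rwa [anomalies, process_eq_of_not_advances hb.2 hx] at h

/-- What the learner's states satisfy on informants for `finiteVariant n b`. -/
def VariantInvariant (n b : ℕ) (p : ColumnState) : Prop :=
  p.1 = n ∧ p.2.1 ≠ some false ∧ ∀ c ∈ p.2.2, c ∈ oddColumn n ∧ (stage n b ≤ stage n c → c = b)

theorem unpair_fst_of_mem_finiteVariant (hb : b ∈ oddColumn n) {z : ℕ}
    (hz : z ∈ finiteVariant n b) : z.unpair.1 = n := by
  rcases hz with rfl | hz | hz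
  · exact hb.1
  · exact (unpair_of_mem_anomalies hz).1
  · exact hz.1.1

theorem eq_of_stage_le {z : ℕ} (hz : z ∈ finiteVariant n b) (hodd : z ∈ oddColumn n)
    (hle : stage n b ≤ stage n z) : z = b := by
  rcases hz with rfl | hz | hz
  · rfl
  · exact absurd hodd (notMem_oddColumn_of_mem_anomalies hz)
  · exact absurd hle (stage_lt_of_mem_shown hz.2
      fun h => notMem_oddColumn_of_mem_anomalies h hodd).not_ge

theorem VariantInvariant.columnUpdate (hb : Settled n b) (hp : VariantInvariant n b p)
    (hd : LabeledBy (finiteVariant n b) d) : VariantInvariant n b (columnUpdate p d) := by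
  obtain ⟨rfl, hv, hc⟩ := hp
  refine ⟨columnUpdate_fst p d, ?_, ?_⟩
  · rcases columnUpdate_verdict_cases p d with h | ⟨hA, h⟩ <;> rw [h]
    · exact hv
    · have hpos : d.1 ∈ finiteVariant p.1 b := .inr (.inl (hb.mem_anomalies hA))
      simp [hd.2 hpos]
  · rcases columnUpdate_candidate_cases p d with h | ⟨⟨hodd, hpos⟩, h⟩ <;> rw [h]
    · exact hc
    · rintro c ⟨⟩
      exact ⟨hodd, eq_of_stage_le (hd.1 hpos) hodd⟩

theorem VariantInvariant.eq (hp : VariantInvariant n b p) (hv : p.2.1 ≠ none)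
    (hc : stage n b ≤ candidateStage n p.2.2) : p = (n, some true, some b) := by
  obtain ⟨m, v, c⟩ := p
  obtain ⟨rfl, hv', hcand⟩ := hp
  rcases c with _ | z
  · exact absurd hc (stage_pos _ b).not_ge
  obtain rfl : z = b := (hcand z rfl).2 hc
  rcases v with _ | _ | _
  · exact absurd rfl hv
  · exact absurd rfl hv'
  · rfl

theorem learns_finiteVariant (hb : Settled n b) (hI : IsInformant (finiteVariant n b) I) :
    ∃ s, hypothesis s = finiteVariant n b ∧ ∀ᶠ t in atTop, learnerState I t = s := by
  have hstart : ∀ z ∈ finiteVariant n b, VariantInvariant n b (z.unpair.1, none, none) :=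
    fun z hz => ⟨unpair_fst_of_mem_finiteVariant hb.1 hz, by simp, by simp⟩
  have hstep := fun p d (hd : LabeledBy (finiteVariant n b) d) hp =>
    VariantInvariant.columnUpdate (p := p) hb hp hd
  have hverdict := eventually_learnerState hI (Q := fun p => p.2.1 ≠ none) hstart hstep
    (z := Nat.pair n 0) (.inr (.inl (pair_zero_mem_anomalies n b)))
    (fun p hp => columnUpdate_verdict_ne_none (hp.1.symm ▸ pair_zero_mem_anomalies n _))
    (fun p d _ hp => (columnUpdate_verdict_of_ne_none hp).trans_ne hp)
  have hcandidate := eventually_learnerState hI (Q := fun p => stage n b ≤ candidateStage n p.2.2)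
    hstart hstep (z := b) (Set.mem_insert _ _)
    (fun p hp => hp.1 ▸ stage_le_candidateStage_columnUpdate (d := (b, true))
      (hp.1.symm ▸ hb.1) rfl hp.2.1)
    (fun p d hP hp => hp.trans (hP.1 ▸ candidateStage_le_columnUpdate p d))
  refine ⟨some (n, some true, some b), by simp [hypothesis, columnHypothesis], ?_⟩
  filter_upwards [hverdict, hcandidate] with t ht₁ ht₂
  obtain ⟨p, hp, hP, hv⟩ := ht₁
  obtain ⟨q, hq, -, hc⟩ := ht₂
  obtain rfl := Option.mem_unique hp hq
  rw [Option.mem_def.1 hp, hP.eq hv hc]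

end Convergence

theorem itInfEx_separatingClass : ItInfEx separatingClass := by
  refine itInfEx_of_stabilizing primrec_learnerUpdate none rePred_mem_hypothesis ?_
  rintro L (rfl | ⟨n, rfl⟩ | ⟨n, b, hb, rfl⟩) I hI
  · exact learns_empty hI
  · exact learns_oddColumn hI
  · exact learns_finiteVariant hb hI

/-! ### Diagonalizing against strongly non-U-shaped learners -/

section Diagonalization

variable {M : List Datum →. ℕ} {n k s x b e : ℕ} {σ₀ : List Datum} {l l' v A : List ℕ}

/-- The presentation, after `σ₀`, of the numbers in `l` with their labels for `oddColumn n`. -/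
noncomputable def present (σ₀ : List Datum) (n : ℕ) (l : List ℕ) : List Datum :=
  σ₀ ++ l.map (label (oddColumn n))

theorem present_append (σ₀ : List Datum) (n : ℕ) (l l' : List ℕ) :
    present σ₀ n (l ++ l') = present σ₀ n l ++ l'.map (label (oddColumn n)) := by
  simp [present]

theorem present_prefix_present (σ₀ : List Datum) (n : ℕ) (h : l <+: l') :
    present σ₀ n l <+: present σ₀ n l' := by
  obtain ⟨r, rfl⟩ := h
  exact present_append σ₀ n l r ▸ List.prefix_append _ _

theorem exists_code_present (hM : Partrec M) (σ₀ : List Datum) :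
    ∃ c : Code, ∀ n l, c.eval (Nat.pair n (Encodable.encode l)) = M (present σ₀ n l) := by
  have hlabel : Primrec₂ fun (m z : ℕ) => label (oddColumn m.unpair.1) z := by
    refine (Primrec.snd.pair (primrecRel_mem_oddColumn.decide.comp Primrec.snd
      (Primrec.fst.comp (Primrec.unpair.comp Primrec.fst)))).of_eq fun p => ?_
    simp [label]
  have hpresent : Primrec fun m : ℕ =>
      present σ₀ m.unpair.1 (Denumerable.ofNat (List ℕ) m.unpair.2) :=
    Primrec.list_append.comp (Primrec.const σ₀) (Primrec.list_map
      ((Primrec.ofNat (List ℕ)).comp (Primrec.snd.comp Primrec.unpair)) hlabel)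
  obtain ⟨c, hc⟩ := Code.exists_code.1 (Partrec.nat_iff.1 (hM.comp hpresent.to_comp))
  exact ⟨c, fun n l => by simp [hc]⟩

/-- The process for column `n` simulates the learner `M` after `σ₀`, and at that point `M` ignores
negative data about the column. -/
structure Targets (n : ℕ) (M : List Datum →. ℕ) (σ₀ : List Datum) : Prop where
  negative : ∀ d ∈ σ₀, d.2 = false ∧ d.1 < n
  ignores : ∀ z ≥ n, M (σ₀ ++ [(z, false)]) = M σ₀
  eval_eq : ∀ l, (Denumerable.ofNat Code n.unpair.1).eval (Nat.pair n (Encodable.encode l)) =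
    M (present σ₀ n l)

theorem exists_targets (hM : Partrec M) (hit : Iterative M) (hL : ExLearns M ∅) :
    ∃ n σ₀, Targets n M σ₀ := by
  obtain ⟨T, e, -, hT⟩ := hL _ (isInformant_label ∅)
  obtain ⟨c, hc⟩ := exists_code_present hM (seg (label ∅) T)
  have hTn : T ≤ Nat.pair (Encodable.encode c) T := Nat.right_le_pair _ _
  refine ⟨Nat.pair (Encodable.encode c) T, seg (label ∅) T, ?_, fun z hz => ?_, fun l => ?_⟩
  · intro d hd
    obtain ⟨i, hi, rfl⟩ := mem_seg.1 hd
    exact ⟨by simp [label], hi.trans_le hTn⟩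
  · have hTz : T ≤ z := hTn.trans hz
    have hz' : seg (label ∅) (z + 1) = seg (label ∅) z ++ [(z, false)] := by
      rw [seg_succ, label_of_notMem (Set.notMem_empty z)]
    calc M (seg (label ∅) T ++ [(z, false)])
        = M (seg (label ∅) z ++ [(z, false)]) :=
          hit.congr_append ((hT T le_rfl).trans (hT z hTz).symm) _
      _ = Part.some e := hz' ▸ hT (z + 1) (hTz.trans z.le_succ)
      _ = M (seg (label ∅) T) := (hT T le_rfl).symm
  · simpa using hc _ l

theorem Targets.correctFor_present (hT : Targets n M σ₀) (l : List ℕ) :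
    CorrectFor (oddColumn n) (present σ₀ n l) := by
  refine CorrectFor.append (fun d hd => ?_) (correctFor_map_label _ l)
  have hd1 : d.1 ∉ oddColumn n := fun h =>
    (hT.negative d hd).2.not_ge (le_of_unpair_fst_eq h.1)
  simp [LabeledBy, (hT.negative d hd).1, hd1]

theorem Targets.eq_of_query (hT : Targets n M σ₀) (h : query n k l = some e) :
    M (present σ₀ n l) = Part.some e :=
  hT.eval_eq l ▸ Part.eq_some_iff.2 (Code.evaln_sound h)

theorem Targets.eventually_query (hT : Targets n M σ₀) (h : M (present σ₀ n l) = Part.some e) :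
    ∀ᶠ k in atTop, query n k l = some e := by
  rw [← hT.eval_eq, Part.eq_some_iff] at h
  obtain ⟨k, hk⟩ := Code.evaln_complete.1 h
  filter_upwards [eventually_ge_atTop k] with k' hk'
  exact Code.evaln_mono hk' hk

theorem Targets.present_append_of_ignored (hT : Targets n M σ₀) (hit : Iterative M)
    (hA : ∀ z ∈ A, n ≤ z ∧ z ∉ oddColumn n) (l : List ℕ) :
    M (present σ₀ n (A ++ l)) = M (present σ₀ n l) := by
  suffices M (σ₀ ++ A.map (label (oddColumn n))) = M σ₀ by
    rw [present_append, present, present]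
    exact hit.congr_append this _
  induction A with
  | nil => simp
  | cons z A ih =>
    obtain ⟨⟨hz, hzn⟩, hA⟩ := List.forall_mem_cons.1 hA
    rw [List.map_cons, label_of_notMem hzn, ← List.singleton_append, ← List.append_assoc,
      hit.congr_append (hT.ignores z hz), ih hA]

theorem Targets.of_advances (hT : Targets n M σ₀) (h : Advances n x) :
    M (present σ₀ n (shown n x ++ trial x (anomalies n x))) ≠ M (present σ₀ n (shown n x)) ∧
      M (present σ₀ n (shown n x ++ trial x (anomalies n x) ++ anomalies n x)) =
        M (present σ₀ n (shown n x ++ trial x (anomalies n x))) := by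
  obtain ⟨hv, hvl, hne, heq⟩ := h
  obtain ⟨e, he⟩ := Option.isSome_iff_exists.1 hv
  obtain ⟨e', he'⟩ := Option.isSome_iff_exists.1 hvl
  rw [hT.eq_of_query he, hT.eq_of_query he', hT.eq_of_query (heq.trans he')]
  refine ⟨fun h => hne ?_, rfl⟩
  rw [he, he', Part.some_injective h]

theorem Targets.present_visible (hT : Targets n M σ₀) (hit : Iterative M) (x : ℕ) :
    M (present σ₀ n (visible n x)) = M (present σ₀ n (shown n x)) := by
  induction x with
  | zero => rfl
  | succ x ih =>
    by_cases h : Advances n x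
    · have hcongr := hit.congr_append (hT.of_advances h).2.symm
      rw [visible_succ_of_advances h, (process_succ_of_advances h).2, present_append,
        hit.congr_append ih, ← present_append, ← List.append_assoc, present_append, hcongr,
        ← present_append]
      simp only [List.append_assoc]
    · rwa [visible, anomalies_succ_of_not_advances h, shown_succ_of_not_advances h]

theorem Targets.not_exLearns_of_frequently_advances (hT : Targets n M σ₀)
    (h : ∃ᶠ x in atTop, Advances n x) : ¬ ExLearns M (oddColumn n) := by
  intro hL
  have hmono : ∀ x y, x ≤ y → present σ₀ n (shown n x) <+: present σ₀ n (shown n y) :=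
    fun x y hxy => present_prefix_present σ₀ n (shown_prefix_shown n hxy)
  have hcover : ∀ z, ∃ x, z ∈ (present σ₀ n (shown n x)).map Prod.fst := fun z => by
    obtain ⟨x, hx, hadv⟩ := frequently_atTop'.1 h z
    exact ⟨x + 1, by simp [present, label, mem_shown_succ_of_advances hadv hx]⟩
  obtain ⟨I, hI, hseg⟩ := exists_informant_of_chain hmono
    (fun x => hT.correctFor_present (shown n x)) hcover
  obtain ⟨t₀, e, -, hstable⟩ := hL I hI
  have hlate : ∀ {l x}, t₀ ≤ (present σ₀ n l).length → l <+: shown n x →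
      M (present σ₀ n l) = Part.some e := fun {l x} hl hlx => by
    have hpre := (hseg x).symm ▸ present_prefix_present σ₀ n hlx
    exact (congrArg M (eq_seg_of_prefix_seg hpre)).trans (hstable _ hl)
  obtain ⟨y, hy⟩ := exists_length_ge_of_cover hmono hcover t₀
  obtain ⟨x, hyx, hadv⟩ := frequently_atTop.1 h y
  have hx : t₀ ≤ (present σ₀ n (shown n x)).length := hy.trans (hmono y x hyx).length_le
  have hgrow := present_prefix_present σ₀ n
    (List.prefix_append (shown n x) (trial x (anomalies n x)))
  have hnext : shown n x ++ trial x (anomalies n x) <+: shown n (x + 1) := by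
    rw [(process_succ_of_advances hadv).2, ← List.append_assoc]
    exact List.prefix_append _ _
  exact (hT.of_advances hadv).1
    ((hlate (hx.trans hgrow.length_le) hnext).trans (hlate hx List.prefix_rfl).symm)

theorem Targets.exists_learned_avoiding (hT : Targets n M σ₀) (hit : Iterative M)
    (hL : ExLearns M (oddColumn n)) (v : List ℕ) (hA : ∀ z ∈ A, n ≤ z ∧ z ∉ oddColumn n) :
    ∃ l e, (∀ z ∈ l, z ∉ A) ∧ W e = oddColumn n ∧ M (present σ₀ n (v ++ l)) = Part.some e := by
  obtain ⟨K, e, he, hK⟩ := hL.exists_stable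
    (f := fun t => label (oddColumn n) (skip A.toFinset t)) (hT.correctFor_present (A ++ v))
    (fun t => labeledBy_label _ _) (fun z => by
      by_cases hz : z ∈ A
      · exact .inl (by simp [present, label, hz])
      · exact .inr ⟨z, skip_of_notMem (by simpa using hz)⟩)
  refine ⟨(List.range K).map (skip A.toFinset), e, fun z hz => ?_, he, ?_⟩
  · obtain ⟨t, -, rfl⟩ := List.mem_map.1 hz
    exact fun h => skip_notMem A.toFinset t (List.mem_toFinset.2 h)
  · rw [← hT.present_append_of_ignored hit hA, ← List.append_assoc, present_append, List.map_map]
    exact hK K le_rfl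

theorem exists_time_trial_eq (l : List ℕ) {P : ℕ → Prop} (hP : ∀ᶠ k in atTop, P k) (s : ℕ)
    (hl : ∀ z ∈ l, z ∉ A) : ∃ x ≥ s, P x.unpair.2 ∧ trial x A = l := by
  have hlt : ∀ᶠ k in atTop, ∀ z ∈ l.toFinset, z < k :=
    l.toFinset.eventually_all.2 fun z _ => eventually_gt_atTop z
  obtain ⟨k, ⟨hPk, hlk⟩, hsk⟩ := ((hP.and hlt).and (eventually_ge_atTop s)).exists
  have hk : k ≤ Nat.pair (Encodable.encode l) k := Nat.right_le_pair _ _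
  refine ⟨Nat.pair (Encodable.encode l) k, hsk.trans hk, by simpa using hPk, ?_⟩
  simp only [trial, Nat.unpair_pair, Denumerable.ofNat_encode]
  exact List.filter_eq_self.2 fun z hz =>
    decide_eq_true ⟨(hlk z (List.mem_toFinset.2 hz)).trans_le hk, hl z hz⟩

theorem Targets.learned_shown (hT : Targets n M σ₀) (hit : Iterative M)
    (hL : ExLearns M (oddColumn n)) (hsnu : ∀ I, IsInformant (oddColumn n) I → SNUOn M I)
    (h : ∀ x ≥ s, ¬ Advances n x) :
    ∃ e, W e = oddColumn n ∧ M (present σ₀ n (shown n s)) = Part.some e := by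
  obtain ⟨l, e, hl, he, hvl⟩ := hT.exists_learned_avoiding hit hL (shown n s)
    (A := anomalies n s) fun z hz =>
      ⟨le_of_unpair_fst_eq (unpair_of_mem_anomalies hz).1, notMem_oddColumn_of_mem_anomalies hz⟩
  have hvlA : M (present σ₀ n (shown n s ++ l ++ anomalies n s)) = Part.some e := by
    rw [present_append]
    exact append_eq_of_snu hit hL hsnu (hT.correctFor_present _) (correctFor_map_label _ _) he hvl
  obtain ⟨e', he'⟩ := Part.dom_iff_mem.1 (hL.dom hit (hT.correctFor_present (shown n s)))
  have hv := Part.eq_some_iff.2 he'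
  obtain ⟨x, hsx, ⟨hqv, hqvl, hqvlA⟩, htrial⟩ := exists_time_trial_eq l
    ((hT.eventually_query hv).and ((hT.eventually_query hvl).and (hT.eventually_query hvlA))) s hl
  refine ⟨e, he, hv.trans (congrArg Part.some ?_)⟩
  by_contra hne
  refine h x hsx ?_
  rw [Advances, shown, anomalies, process_eq_of_not_advances h hsx, ← anomalies, ← shown, htrial]
  exact ⟨by simp [hqv], by simp [hqvl], by simp [hqv, hqvl, hne], hqvlA.trans hqvl.symm⟩

theorem finiteVariant_eq_insert_core (h : ∀ x ≥ s, ¬ Advances n x) (hb : s ≤ b) :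
    finiteVariant n b = insert b (core n s) := by
  rw [finiteVariant, core, anomalies, shown, process_eq_of_not_advances h hb, ← anomalies,
    ← shown, core]

theorem Targets.correctFor_finiteVariant (hT : Targets n M σ₀) (h : ∀ x ≥ s, ¬ Advances n x)
    (hb : b ∈ oddColumn n) (hsb : s ≤ b) :
    CorrectFor (finiteVariant n b) (present σ₀ n (visible n s)) := by
  intro d hd
  refine (hT.correctFor_present _ d hd).congr ⟨fun hodd => ?_, fun hvar => ?_⟩
  all_goals rcases List.mem_append.1 hd with hσ | hv
  · exact absurd (le_of_unpair_fst_eq hodd.1) (hT.negative d hσ).2.not_ge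
  · obtain ⟨z, hz, rfl⟩ := List.mem_map.1 hv
    rw [finiteVariant_eq_insert_core h hsb]
    exact .inr (.inr ⟨hodd, (List.mem_filter.1 hz).1⟩)
  · exact absurd (le_of_unpair_fst_eq (unpair_fst_of_mem_finiteVariant hb hvar))
      (hT.negative d hσ).2.not_ge
  · obtain ⟨z, hz, rfl⟩ := List.mem_map.1 hv
    rw [finiteVariant_eq_insert_core h hsb] at hvar
    rcases hvar with heq | hA | hvar
    · exact heq ▸ hb
    · exact absurd hA (of_decide_eq_true (List.mem_filter.1 hz).2)
    · exact hvar.1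

theorem lt_of_mem_core (hb : b ∈ oddColumn n) (h : b ∈ core n s) : b < s := by
  have hA : b ∉ anomalies n s := fun hA => notMem_oddColumn_of_mem_anomalies hA hb
  obtain ⟨y, -, hby, hys⟩ := exists_advances_of_mem_shown (h.resolve_left hA).2 hA
  exact hby.trans hys

theorem Targets.not_learns_of_eventually_not_advances (hT : Targets n M σ₀) (hit : Iterative M)
    (hsnu : ∀ I, IsInformant (oddColumn n) I → SNUOn M I)
    (h : ∀ᶠ x in atTop, ¬ Advances n x) : ¬ ∀ L ∈ separatingClass, ExLearns M L := by
  intro hL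
  obtain ⟨s, hs⟩ := eventually_atTop.1 h
  have hodd : ExLearns M (oddColumn n) := hL _ (.inr (.inl ⟨n, rfl⟩))
  obtain ⟨e, he, hshown⟩ := hT.learned_shown hit hodd hsnu hs
  have hvisible := (hT.present_visible hit s).trans hshown
  refine not_learns_insert_of_ignored hit (B := oddColumn n \ Set.Iio s) (C := core n s)
    (β := present σ₀ n (visible n s)) ((oddColumn_infinite n).sdiff (Set.finite_Iio s))
    (Set.disjoint_left.2 fun b hb hC => hb.2 (lt_of_mem_core hb.1 hC)) ?_ ?_ ?_
  all_goals rintro b ⟨hb, hsb⟩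
  all_goals replace hsb : s ≤ b := not_lt.1 hsb
  · rw [← finiteVariant_eq_insert_core hs hsb]
    exact hT.correctFor_finiteVariant hs hb hsb
  · rw [hvisible]
    exact append_eq_of_snu hit hodd hsnu (hT.correctFor_present _)
      (correctFor_singleton (by simp [LabeledBy, hb])) he hvisible
  · rw [← finiteVariant_eq_insert_core hs hsb]
    exact hL _ (.inr (.inr ⟨n, b, ⟨hb, fun x hx => hs x (hsb.trans hx)⟩, rfl⟩))

end Diagonalization

theorem not_itInfSNUEx_separatingClass : ¬ ItInfSNUEx separatingClass := by
  rintro ⟨M, hM, hit, hL, hsnu⟩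
  obtain ⟨n, σ₀, hT⟩ := exists_targets hM hit (hL ∅ (.inl rfl))
  have hodd : oddColumn n ∈ separatingClass := .inr (.inl ⟨n, rfl⟩)
  by_cases h : ∃ᶠ x in atTop, Advances n x
  · exact hT.not_exLearns_of_frequently_advances h (hL _ hodd)
  · exact hT.not_learns_of_eventually_not_advances hit (hsnu _ hodd) (not_frequently.1 h) hL

/-- Strong non-U-shapedness restricts iterative learning from informant:
`[ItInfSNUEx] ⊊ [ItInfEx]`. -/
theorem snu_restricts_itInfEx :
    (∃ 𝓛 : Set (Set ℕ), ItInfEx 𝓛 ∧ ¬ ItInfSNUEx 𝓛) ∧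
    {𝓛 : Set (Set ℕ) | ItInfSNUEx 𝓛} ⊂ {𝓛 : Set (Set ℕ) | ItInfEx 𝓛} := by
  refine ⟨⟨separatingClass, itInfEx_separatingClass, not_itInfSNUEx_separatingClass⟩, ?_,
    fun h => not_itInfSNUEx_separatingClass (h itInfEx_separatingClass)⟩
  rintro 𝓛 ⟨M, hM, hit, hL, -⟩
  exact ⟨M, hM, hit, hL⟩
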